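/- Let α < 2 with α ≠ 0 and α ≠ 1, let ν > 0, and let t be a real number with ν + t > 0. Then ∫_0^∞ (e^{-t y} - 1 - (e^{-y} - 1) t) · e^{-ν y} y^{-(1+α)} dy = Γ(-α) · ((ν + t)^α - ν^α + (ν^α - (ν + 1)^α) t), where Γ is the real Gamma function. -/

import Mathlib

open MeasureTheory

/-!
The integrand is `y ^ (-α - 1)` times a sum `∑ i, c i * exp (-a i * y)` of exponentials with rates
`ν + t`, `ν`, `ν + 1` and coefficients `1`, `t - 1`, `-t`, so the integral is its Mellin transform
at `s = -α`. For `0 < re s` each exponential contributes `Γ(s) * a ^ (-s)`. The compensation makes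
the moments `∑ i, c i` and `∑ i, c i * a i` vanish, so the sum is `O(y ^ 2)` at the origin; each
vanishing moment allows one integration by parts, which moves the formula from `s + 1` to `s` and
so carries it down to `-2 < re s`.
-/

section Mellin

open Asymptotics Complex Filter Set
open scoped Nat Topology

lemma hasMellin_finsetSum {ι E : Type*} [NormedAddCommGroup E] [NormedSpace ℂ E] {t : Finset ι}
    {f : ι → ℝ → E} {s : ℂ} {m : ι → E}
    (h : ∀ i ∈ t, HasMellin (f i) s (m i)) :
    HasMellin (fun y ↦ ∑ i ∈ t, f i y) s (∑ i ∈ t, m i) := by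
  constructor
  · simpa only [MellinConvergent, Finset.smul_sum] using!
      integrable_finsetSum t fun i hi ↦ (h i hi).1
  · rw [mellin]
    simp_rw [Finset.smul_sum]
    rw [integral_finsetSum t fun i hi ↦ (h i hi).1]
    exact Finset.sum_congr rfl fun i hi ↦ (h i hi).2

lemma mellin_ofReal (f : ℝ → ℝ) (σ : ℝ) :
    mellin (fun y ↦ (f y : ℂ)) σ = ((∫ y in Ioi (0 : ℝ), f y * y ^ (σ - 1) : ℝ) : ℂ) := by
  rw [mellin, ← integral_complex_ofReal]
  refine setIntegral_congr_fun measurableSet_Ioi fun y hy ↦ ?_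
  simp [ofReal_cpow (le_of_lt hy), mul_comm]

lemma tendsto_mul_ofReal_cpow_zero_of_isBigO_rpow {f : ℝ → ℂ} {s : ℂ} {a : ℝ} {l : Filter ℝ}
    (hpos : ∀ᶠ y in l, 0 < y) (hf : f =O[l] fun y : ℝ ↦ y ^ (-a))
    (hlim : Tendsto (fun y : ℝ ↦ y ^ (s.re - a)) l (𝓝 0)) :
    Tendsto (f * fun y : ℝ ↦ (y : ℂ) ^ s) l (𝓝 0) := by
  have hpow : (fun y : ℝ ↦ (y : ℂ) ^ s) =O[l] fun y : ℝ ↦ y ^ s.re :=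
    .of_bound 1 <| hpos.mono fun y hy ↦ by
      rw [norm_cpow_eq_rpow_re_of_pos hy, one_mul]
      exact le_abs_self _
  refine ((hf.mul hpow).congr' .rfl ?_).trans_tendsto hlim
  filter_upwards [hpos] with y hy
  rw [← Real.rpow_add hy]
  congr 1
  ring

theorem hasMellin_of_hasDerivAt {f f' : ℝ → ℂ} {s m : ℂ} {a b : ℝ} (hs : s ≠ 0)
    (hderiv : ∀ y ∈ Ioi (0 : ℝ), HasDerivAt f (f' y) y)
    (hf_top : f =O[atTop] fun y : ℝ ↦ y ^ (-a)) (hs_top : s.re < a)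
    (hf_bot : f =O[𝓝[>] 0] fun y : ℝ ↦ y ^ (-b)) (hs_bot : b < s.re)
    (hf' : HasMellin f' (s + 1) m) : HasMellin f s (-m / s) := by
  obtain ⟨hf'_conv, rfl⟩ := hf'
  have hcont : ContinuousOn f (Ioi 0) := HasDerivAt.continuousOn hderiv
  have hf_conv : MellinConvergent f s :=
    mellinConvergent_of_isBigO_rpow (hcont.locallyIntegrableOn measurableSet_Ioi)
      hf_top hs_top hf_bot hs_bot
  have hrpow_zero : Tendsto (fun y : ℝ ↦ y ^ (s.re - b)) (𝓝[>] 0) (𝓝 0) := by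
    have h := (Real.continuousAt_rpow_const 0 _ (.inr (sub_pos.2 hs_bot).le)).tendsto
    rw [Real.zero_rpow (sub_pos.2 hs_bot).ne'] at h
    exact h.mono_left nhdsWithin_le_nhds
  have hlim_zero := tendsto_mul_ofReal_cpow_zero_of_isBigO_rpow self_mem_nhdsWithin
    hf_bot hrpow_zero
  have hlim_top := tendsto_mul_ofReal_cpow_zero_of_isBigO_rpow (s := s) (eventually_gt_atTop 0)
    hf_top (by simpa using tendsto_rpow_neg_atTop (sub_pos.2 hs_top))
  have hparts := integral_Ioi_mul_deriv_eq_deriv_mul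
    (u := f) (u' := f') (v' := fun y : ℝ ↦ s * (y : ℂ) ^ (s - 1)) hderiv
    (fun y hy ↦ hasDerivAt_ofReal_cpow_const (ne_of_gt hy) hs)
    (by simpa [MellinConvergent, IntegrableOn, Pi.mul_def, mul_comm, mul_left_comm]
      using hf_conv.const_mul s)
    (by simpa [MellinConvergent, IntegrableOn, Pi.mul_def, mul_comm] using hf'_conv)
    hlim_zero hlim_top
  refine ⟨hf_conv, ?_⟩
  rw [eq_div_iff hs, mellin, mellin, ← integral_mul_const]
  simpa [mul_comm, mul_left_comm] using hparts

lemma hasDerivAt_cexp_neg_mul_ofReal (a : ℂ) (y : ℝ) :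
    HasDerivAt (fun y : ℝ ↦ cexp (-a * y)) (-a * cexp (-a * y)) y := by
  simpa [mul_comm] using ((hasDerivAt_id (y : ℂ)).const_mul (-a)).cexp.comp_ofReal

lemma cexp_neg_mul_isBigO_rpow_atTop {a : ℂ} (ha : 0 < a.re) (r : ℝ) :
    (fun y : ℝ ↦ cexp (-a * y)) =O[atTop] fun y : ℝ ↦ y ^ r := by
  refine .trans (.of_norm_eventuallyLE (.of_forall fun y ↦ ?_))
    (isLittleO_exp_neg_mul_rpow_atTop ha r).isBigO
  simp [norm_exp]

-- The exponent `-0` matches the bound `y ^ (-b)` in `mellinConvergent_of_isBigO_rpow`.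
lemma cexp_neg_mul_isBigO_rpow_zero (a : ℂ) :
    (fun y : ℝ ↦ cexp (-a * y)) =O[𝓝[>] 0] fun y : ℝ ↦ y ^ (-0 : ℝ) := by
  have hcont : ContinuousAt (fun y : ℝ ↦ cexp (-a * y)) 0 := by fun_prop
  simpa using (hcont.tendsto.isBigO_one ℝ).mono nhdsWithin_le_nhds

lemma mellinConvergent_cexp_neg_mul {a s : ℂ} (ha : 0 < a.re) (hs : 0 < s.re) :
    MellinConvergent (fun y : ℝ ↦ cexp (-a * y)) s :=
  mellinConvergent_of_isBigO_rpow
    ((by fun_prop : Continuous fun y : ℝ ↦ cexp (-a * y)).locallyIntegrable.locallyIntegrableOn _)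
    (cexp_neg_mul_isBigO_rpow_atTop ha _) (lt_add_one s.re) (cexp_neg_mul_isBigO_rpow_zero a) hs

lemma mellin_cexp_neg_mul_add_one {a s : ℂ} (ha : 0 < a.re) (hs : 0 < s.re) :
    mellin (fun y : ℝ ↦ cexp (-a * y)) (s + 1) =
      s / a * mellin (fun y : ℝ ↦ cexp (-a * y)) s := by
  have ha0 : a ≠ 0 := by rintro rfl; simp at ha
  have hs0 : s ≠ 0 := by rintro rfl; simp at hs
  have hconv : MellinConvergent (fun y : ℝ ↦ cexp (-a * y)) (s + 1) :=
    mellinConvergent_cexp_neg_mul ha (by simp; linarith)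
  have h := hasMellin_of_hasDerivAt hs0 (fun y _ ↦ hasDerivAt_cexp_neg_mul_ofReal a y)
    (cexp_neg_mul_isBigO_rpow_atTop ha _) (lt_add_one s.re) (cexp_neg_mul_isBigO_rpow_zero a) hs
    (hasMellin_const_smul hconv (-a))
  rw [h.2, smul_eq_mul]
  field_simp

lemma norm_cpow_mul_cexp_neg_mul_le {a b s : ℂ} {y : ℝ} (hy : 0 < y) (hab : a.re ≤ b.re) :
    ‖(y : ℂ) ^ s * cexp (-b * y)‖ ≤ ‖(y : ℂ) ^ s * cexp (-a * y)‖ := by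
  rw [norm_mul, norm_mul]
  gcongr
  simpa [norm_exp] using mul_le_mul_of_nonneg_right hab hy.le

lemma hasDerivAt_cpow_smul_cexp_neg_mul (s a : ℂ) {y : ℝ} (hy : 0 < y) :
    HasDerivAt (fun b : ℂ ↦ (y : ℂ) ^ (s - 1) • cexp (-b * y))
      (-((y : ℂ) ^ s * cexp (-a * y))) a := by
  have hy0 : (y : ℂ) ≠ 0 := ofReal_ne_zero.2 hy.ne'
  refine (((hasDerivAt_neg a).mul_const (y : ℂ)).cexp.const_smul
    ((y : ℂ) ^ (s - 1))).congr_deriv ?_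
  rw [cpow_sub _ _ hy0, cpow_one, smul_eq_mul]
  field_simp

lemma hasDerivAt_mellin_cexp_neg_mul {a s : ℂ} (ha : 0 < a.re) (hs : 0 < s.re) :
    HasDerivAt (fun b : ℂ ↦ mellin (fun y : ℝ ↦ cexp (-b * y)) s)
      (-mellin (fun y : ℝ ↦ cexp (-a * y)) (s + 1)) a := by
  have hconv {b : ℂ} (hb : 0 < b.re) :
      IntegrableOn (fun y : ℝ ↦ (y : ℂ) ^ s * cexp (-b * y)) (Ioi 0) := by
    simpa [MellinConvergent] using
      mellinConvergent_cexp_neg_mul (s := s + 1) hb (by simp; linarith)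
  have hhalf : {b : ℂ | (a / 2).re < b.re} ∈ 𝓝 a :=
    (continuous_re.tendsto a).eventually_const_lt (by simpa using half_lt_self ha)
  have hderiv := hasDerivAt_integral_of_dominated_loc_of_deriv_le
    (F' := fun (b : ℂ) (y : ℝ) ↦ -((y : ℂ) ^ s * cexp (-b * y))) hhalf
    (((continuous_re.tendsto a).eventually_const_lt ha).mono fun b hb ↦
      (mellinConvergent_cexp_neg_mul hb hs).aestronglyMeasurable)
    (mellinConvergent_cexp_neg_mul ha hs) (hconv ha).neg.aestronglyMeasurable
    ((ae_restrict_mem measurableSet_Ioi).mono fun y hy b hb ↦ by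
      simpa only [norm_neg] using norm_cpow_mul_cexp_neg_mul_le hy (le_of_lt hb))
    (hconv (b := a / 2) (by simpa using ha)).norm
    ((ae_restrict_mem measurableSet_Ioi).mono fun y hy b _ ↦
      hasDerivAt_cpow_smul_cexp_neg_mul s b hy)
  simpa [mellin, integral_neg] using hderiv.2

theorem hasMellin_cexp_neg_mul {a s : ℂ} (ha : 0 < a.re) (hs : 0 < s.re) :
    HasMellin (fun y : ℝ ↦ cexp (-a * y)) s (Gamma s * a ^ (-s)) := by
  refine ⟨mellinConvergent_cexp_neg_mul ha hs, ?_⟩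
  -- As a function of the rate `b`, the transform times `b ^ s` is locally constant on the right
  -- half-plane, so it equals its value `Γ(s)` at `b = 1`.
  have hderiv (b : ℂ) (hb : 0 < b.re) :
      HasDerivAt (fun b : ℂ ↦ mellin (fun y : ℝ ↦ cexp (-b * y)) s * b ^ s) 0 b := by
    have hb0 : b ≠ 0 := by rintro rfl; simp at hb
    refine ((hasDerivAt_mellin_cexp_neg_mul hb hs).mul
      (hasDerivAt_id b |>.cpow_const (.inl hb))).congr_deriv ?_
    rw [mellin_cexp_neg_mul_add_one hb hs, id, cpow_sub _ _ hb0, cpow_one]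
    ring
  have hconst : mellin (fun y : ℝ ↦ cexp (-a * y)) s * a ^ s =
      mellin (fun y : ℝ ↦ cexp (-1 * y)) s * 1 ^ s :=
    (isOpen_lt continuous_const continuous_re).is_const_of_deriv_eq_zero
      (convex_halfSpace_re_gt 0).isPreconnected
      (fun b hb ↦ (hderiv b hb).differentiableAt.differentiableWithinAt)
      (fun b hb ↦ (hderiv b hb).deriv) ha (by simp)
  have ha0 : a ≠ 0 := by rintro rfl; simp at ha
  have hone : mellin (fun y : ℝ ↦ cexp (-1 * y)) s = Gamma s := by
    simp [Gamma_eq_integral hs, GammaIntegral_eq_mellin]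
  rw [hone, one_cpow, mul_one] at hconst
  rw [cpow_neg, ← hconst, mul_inv_cancel_right₀ (by simp [cpow_eq_zero_iff, ha0])]

/-- The exponential sum `∑ i, c i * exp (-a i * y)` with coefficients `c` and decay rates `a`, as a
function of a real variable `y`. -/
noncomputable def expSum {ι : Type*} [Fintype ι] (c a : ι → ℂ) (y : ℝ) : ℂ :=
  ∑ i, c i * cexp (-a i * y)

variable {ι : Type*} [Fintype ι] {c a : ι → ℂ} {s : ℂ} {n : ℕ}

lemma hasDerivAt_expSum (c a : ι → ℂ) (y : ℝ) :
    HasDerivAt (expSum c a) (-expSum (c * a) a y) y := by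
  refine (HasDerivAt.fun_sum fun i _ ↦
    (hasDerivAt_cexp_neg_mul_ofReal (a i) y).const_mul (c i)).congr_deriv ?_
  simp [expSum, mul_assoc]

lemma expSum_isBigO_rpow_atTop (ha : ∀ i, 0 < (a i).re) (r : ℝ) :
    expSum c a =O[atTop] fun y : ℝ ↦ y ^ r :=
  .fun_sum fun i _ ↦ (cexp_neg_mul_isBigO_rpow_atTop (ha i) r).const_mul_left (c i)

lemma cexp_neg_mul_sub_taylor_isBigO_zero (a : ℂ) (n : ℕ) :
    (fun y : ℝ ↦ cexp (-a * y) - ∑ j ∈ Finset.range n, (-a * y) ^ j / j !) =O[𝓝 0]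
      fun y : ℝ ↦ y ^ n := by
  have hlim : Tendsto (fun y : ℝ ↦ -a * (y : ℂ)) (𝓝 0) (𝓝 0) :=
    Continuous.tendsto' (by fun_prop) _ _ (by simp)
  refine ((exp_sub_sum_range_isBigO_pow n).comp_tendsto hlim).trans ?_
  refine .of_bound (‖a‖ ^ n) (.of_forall fun y ↦ ?_)
  simp [mul_pow]

lemma sum_mul_taylor_eq_zero (hc : ∀ j < n, ∑ i, c i * a i ^ j = 0) (y : ℝ) :
    ∑ i, c i * ∑ j ∈ Finset.range n, (-a i * y) ^ j / j ! = 0 := by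
  simp_rw [Finset.mul_sum]
  rw [Finset.sum_comm]
  refine Finset.sum_eq_zero fun j hj ↦ ?_
  calc ∑ i, c i * ((-a i * y) ^ j / j !)
      = (∑ i, c i * a i ^ j) * ((-y) ^ j / j !) := by
        rw [Finset.sum_mul]
        refine Finset.sum_congr rfl fun i _ ↦ ?_
        rw [show -a i * (y : ℂ) = a i * -y by ring, mul_pow]
        ring
    _ = 0 := by rw [hc j (Finset.mem_range.1 hj), zero_mul]

lemma expSum_isBigO_pow_zero (hc : ∀ j < n, ∑ i, c i * a i ^ j = 0) :
    expSum c a =O[𝓝 0] fun y : ℝ ↦ y ^ n := by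
  have hsub : expSum c a = fun y : ℝ ↦
      ∑ i, c i * (cexp (-a i * y) - ∑ j ∈ Finset.range n, (-a i * y) ^ j / j !) := by
    ext y
    simp only [mul_sub, Finset.sum_sub_distrib, sum_mul_taylor_eq_zero hc, sub_zero, expSum]
  rw [hsub]
  exact .fun_sum fun i _ ↦ (cexp_neg_mul_sub_taylor_isBigO_zero (a i) n).const_mul_left (c i)

lemma hasMellin_expSum_of_re_pos (ha : ∀ i, 0 < (a i).re) (hs : 0 < s.re) :
    HasMellin (expSum c a) s (Gamma s * ∑ i, c i * a i ^ (-s)) := by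
  have hterm (i : ι) : HasMellin (fun y : ℝ ↦ c i * cexp (-a i * y)) s
      (c i * (Gamma s * a i ^ (-s))) := by
    have h := hasMellin_cexp_neg_mul (ha i) hs
    simpa only [h.2, smul_eq_mul] using hasMellin_const_smul h.1 (c i)
  simpa only [Finset.mul_sum, mul_left_comm] using!
    hasMellin_finsetSum (t := Finset.univ) fun i _ ↦ hterm i

theorem hasMellin_expSum (ha : ∀ i, 0 < (a i).re) (hc : ∀ j < n, ∑ i, c i * a i ^ j = 0)
    (hs : -n < s.re) (hs_ne : ∀ k < n, s ≠ -k) :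
    HasMellin (expSum c a) s (Gamma s * ∑ i, c i * a i ^ (-s)) := by
  induction n generalizing c s with
  | zero => exact hasMellin_expSum_of_re_pos ha (by simpa using hs)
  | succ n ih =>
    have hs0 : s ≠ 0 := by simpa using hs_ne 0 n.succ_pos
    have hderiv : HasMellin (expSum (c * a) a) (s + 1)
        (Gamma (s + 1) * ∑ i, (c * a) i * a i ^ (-(s + 1))) := by
      refine ih (fun j hj ↦ ?_) ?_ (fun k hk hsk ↦ hs_ne (k + 1) (by omega) ?_)
      · simpa only [Pi.mul_apply, mul_assoc, ← pow_succ'] using hc (j + 1) (by omega)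
      · push_cast at hs
        rw [add_re, one_re]
        linarith
      · push_cast
        linear_combination hsk
    have hneg := hasMellin_const_smul hderiv.1 (-1 : ℂ)
    rw [hderiv.2] at hneg
    have hbot : expSum c a =O[𝓝[>] 0] fun y : ℝ ↦ y ^ (-(-((n + 1 : ℕ) : ℝ))) := by
      simpa only [neg_neg, Real.rpow_natCast] using
        (expSum_isBigO_pow_zero hc).mono nhdsWithin_le_nhds
    have h := hasMellin_of_hasDerivAt hs0
      (fun y _ ↦ (hasDerivAt_expSum c a y).congr_deriv (by simp))
      (expSum_isBigO_rpow_atTop ha _) (lt_add_one s.re) hbot hs hneg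
    convert h using 1
    have hrate (i : ι) : (c * a) i * a i ^ (-(s + 1)) = c i * a i ^ (-s) := by
      have hai : a i ≠ 0 := fun h ↦ by simpa [h] using ha i
      rw [neg_add, ← sub_eq_add_neg, cpow_sub _ _ hai, cpow_one, Pi.mul_apply]
      field_simp
    simp only [hrate, Gamma_add_one s hs0, smul_eq_mul]
    field_simp

theorem stmt_12_general (α ν t : ℂ) (hα : α.re < 2) (hα0 : α ≠ 0) (hα1 : α ≠ 1)
    (hν : 0 < ν.re) (ht : 0 < (ν + t).re) :
    HasMellin (fun y : ℝ ↦ (cexp (-t * y) - 1 - (cexp (-y) - 1) * t) * cexp (-ν * y)) (-α)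
      (Gamma (-α) * ((ν + t) ^ α - ν ^ α + (ν ^ α - (ν + 1) ^ α) * t)) := by
  have h := hasMellin_expSum (n := 2) (s := -α) (c := ![1, t - 1, -t]) (a := ![ν + t, ν, ν + 1])
    (by
      have : 0 < (ν + 1).re := by rw [add_re, one_re]; positivity
      simpa [Fin.forall_fin_succ, hν] using ⟨ht, this⟩)
    (by
      intro j hj
      interval_cases j <;> simp [Fin.sum_univ_three]
      ring)
    (by simpa using hα)
    (by
      intro k hk
      interval_cases k <;> simpa)
  convert h using 1
  · ext y
    simp only [expSum, Fin.sum_univ_three, Matrix.cons_val]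
    rw [neg_add, neg_add, add_mul, add_mul, exp_add, exp_add, neg_one_mul]
    ring
  · simp only [Fin.sum_univ_three, Matrix.cons_val, neg_neg]
    ring

end Mellin

theorem stmt_12 (α ν t : ℝ) (hα : α < 2) (hα0 : α ≠ 0) (hα1 : α ≠ 1)
    (hν : 0 < ν) (ht : 0 < ν + t) :
    ∫ y in Set.Ioi (0 : ℝ),
        (Real.exp (-t * y) - 1 - (Real.exp (-y) - 1) * t) * Real.exp (-ν * y) * y ^ (-(1 + α)) =
      Real.Gamma (-α) * ((ν + t) ^ α - ν ^ α + (ν ^ α - (ν + 1) ^ α) * t) := by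
  have h := (stmt_12_general α ν t (by simpa) (by simpa) (by simpa) (by simpa) (by simpa)).2
  rw [show -(1 + α) = -α - 1 by ring, ← Complex.ofReal_inj, ← mellin_ofReal]
  simpa [Complex.ofReal_cpow, hν.le, ht.le, add_nonneg, ← Complex.Gamma_ofReal] using h
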